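/- The bordered double circulant Z4-code of length 56 determined by (α,β,γ) = (0,1,1) and circulant first row (0,0,2,2,0,2,0,0,2,0,0,2,3,1,2,0,1,0,1,0,1,1,1,1,0,1,1) is a self-dual Type I Z4-code with minimum Lee weight 18 and minimum Euclidean weight 20. -/

import Mathlib

/-!
Let `B = bdcMatrix 0 1 1 rowD56`, so that the codewords are the vectors `(a, a B)`. As `B Bᵀ = -1`,
the code is self-dual, and its Euclidean weights are divisible by 4. Hence its Lee weights, which
have the same parity, are even, and it is enough to show that no nonzero codeword has Lee weight at
most 16. In such a codeword one half has Lee weight at most 8, and we may assume that it is `a`,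
because reflecting the circulant part of `B` turns `B` into `Bᵀ = -B⁻¹`.

The parity of `a B` only depends on the set of odd coordinates of `a`, of size `k ≤ 8`. The signs of
these coordinates and the coordinates equal to 2 change `a B` by multiples of 2, so that they only
affect the weight of a binary vector, supported where `a B` is even and running through a union of
few cosets. This leaves a finite search, in which cyclic shifts of the circulant part allow us to
impose a ballot condition on the set of odd coordinates, by the cycle lemma. The same search shows
that `k` plus the number of odd coordinates of `a B` is at least 9, which is the claim for the
codewords in `2 C`; these make up the case `k = 0`. Finally, a Euclidean weight is at least the
corresponding Lee weight, hence at least 18, and the first multiple of 4 in this range is 20.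
-/

open Finset

namespace Z4Note

variable {ι : Type*} [Fintype ι]

/-- Hamming weight of a binary vector. -/
def hWt (x : ι → ZMod 2) : ℕ := (Finset.univ.filter fun i => x i ≠ 0).card

/-- Lee value of an element of `ZMod 4`:  0 ↦ 0, 1 ↦ 1, 2 ↦ 2, 3 ↦ 1. -/
def leeVal (a : ZMod 4) : ℕ := min a.val (4 - a.val)

/-- Lee weight `n₁(x) + 2 n₂(x) + n₃(x)`. -/
def leeWt (x : ι → ZMod 4) : ℕ := ∑ i, leeVal (x i)

/-- Euclidean weight `n₁(x) + 4 n₂(x) + n₃(x)`. -/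
def eucWt (x : ι → ZMod 4) : ℕ := ∑ i, (leeVal (x i)) ^ 2

/-- Number of coordinates of `x` equal to `a`. -/
def nCount (a : ZMod 4) (x : ι → ZMod 4) : ℕ := (Finset.univ.filter fun i => x i = a).card

/-- Dual of a `ZMod 4`-code (as a set), w.r.t. the standard inner product. -/
def dualZ4 (C : Set (ι → ZMod 4)) : Set (ι → ZMod 4) :=
  {x | ∀ y ∈ C, ∑ i, x i * y i = 0}

/-- Dual of a binary code (as a set), w.r.t. the standard inner product. -/
def dual2 (C : Set (ι → ZMod 2)) : Set (ι → ZMod 2) :=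
  {x | ∀ y ∈ C, ∑ i, x i * y i = 0}

/-- A `ZMod 4`-code is self-dual if it equals its dual. -/
def SelfDualZ4 (C : Submodule (ZMod 4) (ι → ZMod 4)) : Prop :=
  (C : Set (ι → ZMod 4)) = dualZ4 (C : Set (ι → ZMod 4))

/-- A binary code is self-dual if it equals its dual. -/
def SelfDual2 (D : Submodule (ZMod 2) (ι → ZMod 2)) : Prop :=
  (D : Set (ι → ZMod 2)) = dual2 (D : Set (ι → ZMod 2))

/-- Coordinatewise reduction modulo 2. -/
def res2 (x : ι → ZMod 4) : ι → ZMod 2 :=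
  fun i => ZMod.castHom (by norm_num : (2:ℕ) ∣ 4) (ZMod 2) (x i)

/-- The residue code `C⁽¹⁾ = {c mod 2 : c ∈ C}`. -/
def residue (C : Set (ι → ZMod 4)) : Set (ι → ZMod 2) := res2 '' C

/-- Minimum Lee weight among nonzero codewords. -/
noncomputable def minLee (C : Set (ι → ZMod 4)) : ℕ := sInf {d | ∃ x ∈ C, x ≠ 0 ∧ leeWt x = d}

/-- Minimum Euclidean weight among nonzero codewords. -/
noncomputable def minEuc (C : Set (ι → ZMod 4)) : ℕ := sInf {d | ∃ x ∈ C, x ≠ 0 ∧ eucWt x = d}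

/-- Minimum Hamming weight among nonzero codewords of a binary code. -/
noncomputable def minHam (C : Set (ι → ZMod 2)) : ℕ := sInf {d | ∃ x ∈ C, x ≠ 0 ∧ hWt x = d}

/-- A binary code is doubly even if all weights are divisible by 4. -/
def DoublyEven (C : Set (ι → ZMod 2)) : Prop := ∀ x ∈ C, 4 ∣ hWt x

/-- A binary code is singly even if some codeword has weight not divisible by 4. -/
def SinglyEven (C : Set (ι → ZMod 2)) : Prop := ∃ x ∈ C, ¬ 4 ∣ hWt x

/-- A self-dual `ZMod 4`-code is Type II if all Euclidean weights are divisible by 8. -/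
def TypeII (C : Set (ι → ZMod 4)) : Prop := ∀ x ∈ C, 8 ∣ eucWt x

/-- The doubly even subcode of a binary code. -/
def evenSubcode (D : Set (ι → ZMod 2)) : Set (ι → ZMod 2) := {x ∈ D | 4 ∣ hWt x}

/-- The shadow `S = D₀^⊥ \ D` of a binary code. -/
def shadow (D : Set (ι → ZMod 2)) : Set (ι → ZMod 2) := dual2 (evenSubcode D) \ D

/-- A binary singly even self-dual code is s-extremal if equality holds in the
Bachoc–Gaborit bound relating the minimum weight of the code and of its shadow. -/
def SExtremal (D : Submodule (ZMod 2) (ι → ZMod 2)) : Prop :=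
  SelfDual2 D ∧ SinglyEven (D : Set (ι → ZMod 2)) ∧
  ((¬ (Fintype.card ι % 24 = 22 ∧
        minHam (D : Set (ι → ZMod 2)) = 4 * (Fintype.card ι / 24) + 6)) →
      minHam (shadow (D : Set (ι → ZMod 2))) + 2 * minHam (D : Set (ι → ZMod 2)) =
        Fintype.card ι / 2 + 4) ∧
  ((Fintype.card ι % 24 = 22 ∧
        minHam (D : Set (ι → ZMod 2)) = 4 * (Fintype.card ι / 24) + 6) →
      minHam (shadow (D : Set (ι → ZMod 2))) + 2 * minHam (D : Set (ι → ZMod 2)) =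
        Fintype.card ι / 2 + 8)

/-- Equivalence of `ZMod 4`-codes: coordinate permutation together with sign changes. -/
def Z4Equiv (C C' : Set (ι → ZMod 4)) : Prop :=
  ∃ σ : Equiv.Perm ι, ∃ ε : ι → ZMod 4, (∀ i, ε i = 1 ∨ ε i = -1) ∧
    C' = (fun x => fun i => ε i * x (σ i)) '' C

/-- Covering radius of a binary code. -/
noncomputable def covRad (C : Set (ι → ZMod 2)) : ℕ :=
  sInf {R | ∀ v : ι → ZMod 2, ∃ c ∈ C, hWt (v - c) ≤ R}

/-- Entry `(i,j)` of the circulant matrix with first row `r`. -/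
def circEntry {m : ℕ} (r : Fin m → ZMod 4) (i j : Fin m) : ZMod 4 := r (j - i)

/-- Entry `(i,j)` of the negacirculant matrix with first row `r`. -/
def negaEntry {m : ℕ} (r : Fin m → ZMod 4) (i j : Fin m) : ZMod 4 :=
  if i.val ≤ j.val then r (j - i) else - r (j - i)

/-- The bordered part `B` of the generator matrix of a bordered double circulant code. -/
def bdcB {m : ℕ} (α β γ : ZMod 4) (r : Fin m → ZMod 4) :
    Fin (m+1) → Fin (m+1) → ZMod 4 :=
  Fin.cases (Fin.cases α fun _ => β) (fun i' => Fin.cases γ fun j' => circEntry r i' j')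

/-- Row `i` of the generator matrix `(I | B)` of a bordered double circulant code. -/
def bdcRow {m : ℕ} (α β γ : ZMod 4) (r : Fin m → ZMod 4) (i : Fin (m+1)) :
    (Fin (m+1) ⊕ Fin (m+1)) → ZMod 4 :=
  Sum.elim (fun j => if j = i then 1 else 0) (bdcB α β γ r i)

/-- The bordered double circulant code of length `2(m+1)`. -/
def bdcCode {m : ℕ} (α β γ : ZMod 4) (r : Fin m → ZMod 4) :
    Submodule (ZMod 4) ((Fin (m+1) ⊕ Fin (m+1)) → ZMod 4) :=
  Submodule.span (ZMod 4) (Set.range (bdcRow α β γ r))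

/-- The block matrix `[[A, B], [-Bᵀ, Aᵀ]]` built from negacirculant `A`, `B`. -/
def fourNegaM {n : ℕ} (a b : Fin n → ZMod 4) :
    (Fin n ⊕ Fin n) → (Fin n ⊕ Fin n) → ZMod 4
  | Sum.inl i, Sum.inl j => negaEntry a i j
  | Sum.inl i, Sum.inr j => negaEntry b i j
  | Sum.inr i, Sum.inl j => - negaEntry b j i
  | Sum.inr i, Sum.inr j => negaEntry a j i

/-- Row `i` of the generator matrix `(I | M)` of a four-negacirculant code. -/
def fourNegaRow {n : ℕ} (a b : Fin n → ZMod 4) (i : Fin n ⊕ Fin n) :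
    ((Fin n ⊕ Fin n) ⊕ (Fin n ⊕ Fin n)) → ZMod 4 :=
  Sum.elim (fun j => if j = i then 1 else 0) (fourNegaM a b i)

/-- The four-negacirculant code of length `4n`. -/
def fourNegaCode {n : ℕ} (a b : Fin n → ZMod 4) :
    Submodule (ZMod 4) (((Fin n ⊕ Fin n) ⊕ (Fin n ⊕ Fin n)) → ZMod 4) :=
  Submodule.span (ZMod 4) (Set.range (fourNegaRow a b))

end Z4Note

namespace Z4Note

open scoped Matrix

section Weights

variable {ι κ : Type*} [Fintype ι] [Fintype κ]

theorem leeWt_neg (x : ι → ZMod 4) : leeWt (-x) = leeWt x := by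
  have leeVal_neg : ∀ a : ZMod 4, leeVal (-a) = leeVal a := by decide
  exact Finset.sum_congr rfl fun i _ => leeVal_neg (x i)

theorem leeWt_pos {x : ι → ZMod 4} (hx : x ≠ 0) : 0 < leeWt x := by
  have leeVal_pos : ∀ a : ZMod 4, a ≠ 0 → 0 < leeVal a := by decide
  obtain ⟨i, hi⟩ := Function.ne_iff.1 hx
  exact Finset.sum_pos' (fun _ _ => Nat.zero_le _) ⟨i, Finset.mem_univ i, leeVal_pos _ hi⟩

theorem leeWt_comp_equiv (x : κ → ZMod 4) (e : ι ≃ κ) : leeWt (x ∘ e) = leeWt x :=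
  e.sum_comp fun i => leeVal (x i)

theorem leeWt_eq_inl_add_inr (x : ι ⊕ κ → ZMod 4) :
    leeWt x = leeWt (x ∘ Sum.inl) + leeWt (x ∘ Sum.inr) :=
  Fintype.sum_sum_type _

theorem leeWt_le_eucWt (x : ι → ZMod 4) : leeWt x ≤ eucWt x :=
  Finset.sum_le_sum fun _ _ => Nat.le_self_pow two_ne_zero _

theorem even_leeWt_iff_even_eucWt (x : ι → ZMod 4) : Even (leeWt x) ↔ Even (eucWt x) := by
  simp [leeWt, eucWt, Finset.even_sum_iff_even_card_odd, Nat.odd_pow_iff]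

theorem natCast_eucWt (x : ι → ZMod 4) : (eucWt x : ZMod 4) = x ⬝ᵥ x := by
  have leeVal_sq : ∀ a : ZMod 4, ((leeVal a : ℕ) : ZMod 4) ^ 2 = a * a := by decide
  simp [eucWt, dotProduct, leeVal_sq]

theorem hWt_pos {x : ι → ZMod 2} (hx : x ≠ 0) : 0 < hWt x := by
  obtain ⟨i, hi⟩ := Function.ne_iff.1 hx
  exact Finset.card_pos.2 ⟨i, Finset.mem_filter_univ i |>.2 hi⟩

theorem hWt_comp_equiv (x : κ → ZMod 2) (e : ι ≃ κ) : hWt (x ∘ e) = hWt x := by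
  rw [hWt, hWt, Finset.card_filter, Finset.card_filter]
  exact e.sum_comp fun i => if x i ≠ 0 then 1 else 0

theorem leeWt_eq_hWt_res2_add (x : ι → ZMod 4) :
    leeWt x = hWt (res2 x) + 2 * #{i | x i = 2} := by
  have leeVal_eq : ∀ a : ZMod 4, leeVal a =
      (if ZMod.castHom (by norm_num : (2 : ℕ) ∣ 4) (ZMod 2) a ≠ 0 then 1 else 0) +
        2 * if a = 2 then 1 else 0 := by decide
  rw [leeWt, hWt, Finset.card_filter, Finset.card_filter, Finset.mul_sum,
    ← Finset.sum_add_distrib]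
  exact Finset.sum_congr rfl fun i _ => leeVal_eq (x i)

theorem leeWt_two_smul (x : ι → ZMod 4) : leeWt (2 • x) = 2 * hWt (res2 x) := by
  have leeVal_two_smul : ∀ a : ZMod 4, leeVal (2 • a) =
      2 * if ZMod.castHom (by norm_num : (2 : ℕ) ∣ 4) (ZMod 2) a ≠ 0 then 1 else 0 := by decide
  rw [leeWt, hWt, Finset.card_filter, Finset.mul_sum]
  exact Finset.sum_congr rfl fun i _ => leeVal_two_smul (x i)

theorem exists_eq_two_smul_of_res2_eq_zero {x : ι → ZMod 4} (hx : res2 x = 0) :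
    ∃ y : ι → ZMod 4, x = 2 • y ∧ leeWt y = hWt (res2 y) := by
  have half_spec : ∀ a : ZMod 4, ZMod.castHom (by norm_num : (2 : ℕ) ∣ 4) (ZMod 2) a = 0 →
      a = 2 • if a = 2 then 1 else 0 := by decide
  have half_ne : ∀ a : ZMod 4, (if a = 2 then 1 else 0 : ZMod 4) ≠ 2 := by decide
  refine ⟨fun i => if x i = 2 then 1 else 0, funext fun i => half_spec _ (congrFun hx i), ?_⟩
  simp [leeWt_eq_hWt_res2_add, half_ne]

theorem minLee_eq {C : Set (ι → ZMod 4)} {d : ℕ} {x : ι → ZMod 4} (hx : x ∈ C) (x_ne : x ≠ 0)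
    (leeWt_eq : leeWt x = d) (le_leeWt : ∀ y ∈ C, y ≠ 0 → d ≤ leeWt y) : minLee C = d :=
  IsLeast.csInf_eq ⟨⟨x, hx, x_ne, leeWt_eq⟩, fun _ ⟨y, hy, y_ne, y_eq⟩ => y_eq ▸ le_leeWt y hy y_ne⟩

theorem minEuc_eq {C : Set (ι → ZMod 4)} {d : ℕ} {x : ι → ZMod 4} (hx : x ∈ C) (x_ne : x ≠ 0)
    (eucWt_eq : eucWt x = d) (le_eucWt : ∀ y ∈ C, y ≠ 0 → d ≤ eucWt y) : minEuc C = d :=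
  IsLeast.csInf_eq ⟨⟨x, hx, x_ne, eucWt_eq⟩, fun _ ⟨y, hy, y_ne, y_eq⟩ => y_eq ▸ le_eucWt y hy y_ne⟩

end Weights

section BorderedCode

variable {m : ℕ} {α β γ : ZMod 4} {r : Fin m → ZMod 4}

/-- The matrix `B` of the generator matrix `(I | B)` of a bordered double circulant code. -/
def bdcMatrix (α β γ : ZMod 4) (r : Fin m → ZMod 4) :
    Matrix (Fin (m + 1)) (Fin (m + 1)) (ZMod 4) :=
  Matrix.of (bdcB α β γ r)

theorem mem_bdcCode_iff {x : Fin (m + 1) ⊕ Fin (m + 1) → ZMod 4} :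
    x ∈ bdcCode α β γ r ↔ x ∘ Sum.inr = (x ∘ Sum.inl) ᵥ* bdcMatrix α β γ r := by
  have combination (c : Fin (m + 1) → ZMod 4) :
      ∑ i, c i • bdcRow α β γ r i = Sum.elim c (c ᵥ* bdcMatrix α β γ r) := by
    ext (j | j) <;> simp [bdcRow, bdcMatrix, Matrix.vecMul, dotProduct]
  rw [bdcCode, Submodule.mem_span_range_iff_exists_fun]
  constructor
  · rintro ⟨c, rfl⟩
    rw [combination, Sum.elim_comp_inl, Sum.elim_comp_inr]
  · intro hx
    exact ⟨x ∘ Sum.inl, by rw [combination, ← hx, Sum.elim_comp_inl_inr]⟩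

theorem dotProduct_eq_zero_of_mem_bdcCode
    (hM : bdcMatrix α β γ r * (bdcMatrix α β γ r)ᵀ = -1)
    {x y : Fin (m + 1) ⊕ Fin (m + 1) → ZMod 4}
    (hx : x ∈ bdcCode α β γ r) (hy : y ∈ bdcCode α β γ r) : x ⬝ᵥ y = 0 := by
  rw [mem_bdcCode_iff] at hx hy
  calc x ⬝ᵥ y = (x ∘ Sum.inl) ⬝ᵥ (y ∘ Sum.inl) + (x ∘ Sum.inr) ⬝ᵥ (y ∘ Sum.inr) :=
        Fintype.sum_sum_type _
    _ = 0 := by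
        rw [hx, hy, ← Matrix.dotProduct_mulVec, Matrix.mulVec_vecMul, hM]
        simp [Matrix.neg_mulVec]

theorem selfDual_bdcCode (hM : bdcMatrix α β γ r * (bdcMatrix α β γ r)ᵀ = -1) :
    SelfDualZ4 (bdcCode α β γ r) := by
  refine Set.Subset.antisymm (fun x hx y hy => dotProduct_eq_zero_of_mem_bdcCode hM hx hy) ?_
  intro x hx
  rw [SetLike.mem_coe, mem_bdcCode_iff]
  have hM' : (bdcMatrix α β γ r)ᵀ * bdcMatrix α β γ r = -1 := by
    rw [← neg_eq_iff_eq_neg, ← Matrix.neg_mul, mul_eq_one_comm, Matrix.mul_neg, hM, neg_neg]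
  have left_eq : x ∘ Sum.inl = -((x ∘ Sum.inr) ᵥ* (bdcMatrix α β γ r)ᵀ) := by
    ext i
    have row_mem : bdcRow α β γ r i ∈ bdcCode α β γ r :=
      Submodule.subset_span (Set.mem_range_self i)
    have := hx _ row_mem
    rw [Fintype.sum_sum_type] at this
    simpa [bdcRow, bdcMatrix, Matrix.vecMul, dotProduct, eq_neg_iff_add_eq_zero] using this
  rw [left_eq, Matrix.neg_vecMul, Matrix.vecMul_vecMul, hM']
  simp [Matrix.vecMul_neg]

/-- The permutation of the coordinates of one half of a bordered double circulant code which fixes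
the border and acts as `e` on the circulant part. -/
def borderPerm (e : Equiv.Perm (Fin m)) : Equiv.Perm (Fin (m + 1)) :=
  Equiv.Perm.decomposeFin.symm (0, e)

theorem borderPerm_zero (e : Equiv.Perm (Fin m)) : borderPerm e 0 = 0 :=
  Equiv.Perm.decomposeFin_symm_apply_zero 0 e

theorem borderPerm_succ (e : Equiv.Perm (Fin m)) (i : Fin m) :
    borderPerm e i.succ = (e i).succ := by
  rw [borderPerm, Equiv.Perm.decomposeFin_symm_apply_succ, Equiv.swap_self, Equiv.refl_apply]

variable [NeZero m]

theorem bdcMatrix_submatrix_addRight (t : Fin m) :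
    (bdcMatrix α β γ r).submatrix (borderPerm (Equiv.addRight t)) (borderPerm (Equiv.addRight t)) =
      bdcMatrix α β γ r := by
  ext i j
  cases i using Fin.cases <;> cases j using Fin.cases <;>
    simp [bdcMatrix, bdcB, circEntry, borderPerm_zero, borderPerm_succ]

theorem bdcMatrix_submatrix_neg :
    (bdcMatrix α β β r).submatrix (borderPerm (Equiv.neg _)) (borderPerm (Equiv.neg _)) =
      (bdcMatrix α β β r)ᵀ := by
  ext i j
  cases i using Fin.cases <;> cases j using Fin.cases <;>
    simp [bdcMatrix, bdcB, circEntry, borderPerm_zero, borderPerm_succ, add_comm, sub_eq_add_neg]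

theorem vecMul_bdcMatrix_comp_addRight (a : Fin (m + 1) → ZMod 4) (t : Fin m) :
    (a ∘ borderPerm (Equiv.addRight t)) ᵥ* bdcMatrix α β γ r =
      (a ᵥ* bdcMatrix α β γ r) ∘ borderPerm (Equiv.addRight t) := by
  conv_lhs => rw [← bdcMatrix_submatrix_addRight t]
  rw [Matrix.submatrix_vecMul_equiv, Function.comp_assoc, Equiv.self_comp_symm, Function.comp_id]

/-- Reflecting the circulant part transposes the matrix `B`, which is inverse to `-B`. -/
theorem vecMul_bdcMatrix_comp_neg (hM : bdcMatrix α β β r * (bdcMatrix α β β r)ᵀ = -1)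
    (a : Fin (m + 1) → ZMod 4) :
    ((a ᵥ* bdcMatrix α β β r) ∘ borderPerm (Equiv.neg _)) ᵥ* bdcMatrix α β β r =
      -(a ∘ borderPerm (Equiv.neg _)) := by
  have transpose_submatrix : (bdcMatrix α β β r)ᵀ.submatrix (borderPerm (Equiv.neg _))
      (borderPerm (Equiv.neg _)) = bdcMatrix α β β r := by
    rw [← Matrix.transpose_submatrix, bdcMatrix_submatrix_neg, Matrix.transpose_transpose]
  conv_lhs => arg 2; rw [← transpose_submatrix]
  rw [Matrix.submatrix_vecMul_equiv, Function.comp_assoc, Equiv.self_comp_symm, Function.comp_id,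
    Matrix.vecMul_vecMul, hM, Matrix.vecMul_neg, Matrix.vecMul_one]
  rfl

end BorderedCode

section CycleLemma

/-- Raney's cycle lemma, proved by starting at the minimum of the walk with steps
`N * [p i] - Nat.count p N`. -/
theorem exists_count_mul_le_of_periodic {p : ℕ → Prop} [DecidablePred p] {N : ℕ} (hN : 0 < N)
    (hp : Function.Periodic p N) :
    ∃ t < N, ∀ j, Nat.count p N * j ≤ N * Nat.count (fun i => p (t + i)) j := by
  obtain ⟨t, ht, t_min⟩ := (Finset.range N).exists_min_image
    (fun n => (N * Nat.count p n - Nat.count p N * n : ℤ)) ⟨0, Finset.mem_range.2 hN⟩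
  have count_add_period (n : ℕ) : Nat.count p (N + n) = Nat.count p N + Nat.count p n := by
    rw [Nat.count_add]
    simp only [add_comm N, hp _]
  have count_add_mul (q n : ℕ) : Nat.count p (N * q + n) = Nat.count p N * q + Nat.count p n := by
    induction q with
    | zero => simp
    | succ q ih => rw [show N * (q + 1) + n = N + (N * q + n) by ring, count_add_period, ih]; ring
  refine ⟨t, Finset.mem_range.1 ht, fun j => ?_⟩
  have walk_min := t_min ((t + j) % N) (Finset.mem_range.2 (Nat.mod_lt _ hN))
  have count_mod := count_add_mul ((t + j) / N) ((t + j) % N)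
  rw [Nat.div_add_mod, Nat.count_add] at count_mod
  have add_eq := Nat.div_add_mod (t + j) N
  push_cast at walk_min
  zify at count_mod add_eq ⊢
  linear_combination walk_min - (N : ℤ) * count_mod - (Nat.count p N : ℤ) * add_eq

end CycleLemma

section Packing

/-- The number whose base `256` digits, least significant first, are the entries of `d`. -/
def pack {n : ℕ} (d : Fin n → ℕ) : ℕ := ∑ j, d j * 256 ^ (j : ℕ)

theorem pack_succ {n : ℕ} (d : Fin (n + 1) → ℕ) : pack d = 2 ^ 8 * pack (Fin.tail d) + d 0 := by
  rw [pack, pack, Fin.sum_univ_succ, Finset.mul_sum, add_comm]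
  congr 1
  · exact Finset.sum_congr rfl fun j _ => by rw [Fin.tail, Fin.val_succ]; ring
  · simp

theorem sum_map_pack {n : ℕ} {ι : Type*} (l : List ι) (d : ι → Fin n → ℕ) :
    (l.map fun i => pack (d i)).sum = pack fun j => (l.map fun i => d i j).sum := by
  induction l with
  | nil => simp [pack]
  | cons i l ih =>
    rw [List.map_cons, List.sum_cons, ih]
    simp only [pack, List.map_cons, List.sum_cons, add_mul, Finset.sum_add_distrib]

theorem testBit_pack {n : ℕ} {d : Fin n → ℕ} (hd : ∀ j, d j < 2 ^ 8) (j : Fin n) {i : ℕ}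
    (hi : i < 8) : (pack d).testBit (8 * j + i) = (d j).testBit i := by
  induction n with
  | zero => exact j.elim0
  | succ n ih =>
    rw [pack_succ, Nat.testBit_two_pow_mul_add _ (hd 0)]
    cases j using Fin.cases with
    | zero => simp [hi]
    | succ j =>
      rw [Fin.val_succ, if_neg (by omega), show 8 * (j + 1 : ℕ) + i - 8 = 8 * j + i by omega]
      exact ih (fun j => hd j.succ) j

/-- The number whose `n` base `256` digits are all equal to 1. -/
def ones (n : ℕ) : ℕ := pack fun _ : Fin n => 1

theorem land_ones (n x : ℕ) :
    (x &&& ones n) = pack fun j : Fin n => (x.testBit (8 * j)).toNat := by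
  unfold ones
  induction n generalizing x with
  | zero => simp [pack]
  | succ n ih =>
    have tail_eq : (Fin.tail fun j : Fin (n + 1) => (x.testBit (8 * j)).toNat) =
        fun j : Fin n => ((x / 2 ^ 8).testBit (8 * j)).toNat := by
      funext j
      rw [Nat.testBit_div_two_pow, Fin.tail, Fin.val_succ, mul_add_one]
    rw [pack_succ, pack_succ, tail_eq, ← ih]
    refine Nat.eq_of_testBit_eq fun b => ?_
    rw [Nat.testBit_and, Nat.testBit_two_pow_mul_add _ (by norm_num),
      Nat.testBit_two_pow_mul_add _ ((Bool.toNat_lt _).trans (by norm_num))]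
    split_ifs with hb
    · rcases Nat.mod_two_eq_zero_or_one x with hx | hx <;> cases b <;>
        simp [Nat.testBit_succ, hx]
    · rw [Nat.testBit_and, Nat.testBit_div_two_pow, Nat.sub_add_cancel (not_lt.1 hb)]
      rfl

theorem pack_mod_255 {n : ℕ} (d : Fin n → ℕ) : pack d % 255 = (∑ j, d j) % 255 := by
  rw [pack, Finset.sum_nat_mod, Finset.sum_nat_mod univ 255 d]
  simp [Nat.mul_mod, Nat.pow_mod]

end Packing

section Parity

variable {n : ℕ}

/-- The base `256` digits of a number modulo 2. Binary vectors are encoded in this way, so that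
addition is `Nat.xor` and multiplication is `Nat.land`. -/
def digitParity (n x : ℕ) : Fin n → ZMod 2 := fun j => ((x.testBit (8 * j)).toNat : ℕ)

theorem digitParity_xor (x y : ℕ) :
    digitParity n (x ^^^ y) = digitParity n x + digitParity n y := by
  have toNat_xor : ∀ a b : Bool, ((a ^^ b).toNat : ZMod 2) = a.toNat + b.toNat := by decide
  exact funext fun j => by simp [digitParity, toNat_xor]

theorem digitParity_land (x y : ℕ) :
    digitParity n (x &&& y) = digitParity n x * digitParity n y := by
  have toNat_and : ∀ a b : Bool, ((a && b).toNat : ZMod 2) = a.toNat * b.toNat := by decide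
  exact funext fun j => by simp [digitParity, toNat_and]

theorem digitParity_pack {d : Fin n → ℕ} (hd : ∀ j, d j < 2 ^ 8) (j : Fin n) :
    digitParity n (pack d) j = d j := by
  have := testBit_pack hd j (i := 0) (by norm_num)
  rw [digitParity, ← add_zero (8 * (j : ℕ)), this, Nat.toNat_testBit, pow_zero, Nat.div_one,
    ZMod.natCast_mod]

theorem digitParity_pack_div_two {d : Fin n → ℕ} (hd : ∀ j, d j < 2 ^ 8) (j : Fin n) :
    digitParity n (pack d / 2) j = (d j / 2 : ℕ) := by
  have := testBit_pack hd j (i := 1) (by norm_num)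
  rw [digitParity, Nat.testBit_div_two, this, Nat.toNat_testBit, pow_one, ZMod.natCast_mod]

theorem digitParity_ones : digitParity n (ones n) = 1 :=
  funext fun j => by rw [ones, digitParity_pack fun _ => by norm_num, Nat.cast_one, Pi.one_apply]

theorem hWt_digitParity (hn : n < 255) (x : ℕ) :
    hWt (digitParity n x) = (x &&& ones n) % 255 := by
  have toNat_eq : ∀ b : Bool, b.toNat = if (b.toNat : ZMod 2) ≠ 0 then 1 else 0 := by decide
  have hWt_eq : hWt (digitParity n x) = ∑ j : Fin n, (x.testBit (8 * j)).toNat := by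
    rw [hWt, Finset.card_filter]
    exact Finset.sum_congr rfl fun j _ => (toNat_eq _).symm
  have hWt_le : hWt (digitParity n x) ≤ n := (Finset.card_filter_le _ _).trans_eq (by simp)
  rw [land_ones, pack_mod_255, ← hWt_eq, Nat.mod_eq_of_lt (by omega)]

theorem hWt_mul_le (x y : Fin n → ZMod 2) : hWt (x * y) ≤ hWt y :=
  Finset.card_le_card (Finset.monotone_filter_right _ fun _ _ => right_ne_zero_of_mul)

/-- The encoding of row `i` of `M` as a number. -/
def packRow {ι : Type*} (M : Matrix ι (Fin n) (ZMod 4)) (i : ι) : ℕ := pack fun j => (M i j).val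

theorem digitParity_packRow {ι : Type*} (M : Matrix ι (Fin n) (ZMod 4)) (i : ι) :
    digitParity n (packRow M i) = res2 (M.row i) := by
  have natCast_val : ∀ a : ZMod 4,
      (a.val : ZMod 2) = ZMod.castHom (by norm_num : (2 : ℕ) ∣ 4) (ZMod 2) a := by decide
  funext j
  rw [packRow, digitParity_pack fun j => (ZMod.val_lt (M i j)).trans (by norm_num), natCast_val,
    res2, Matrix.row_apply]

theorem res2_natCast_add_two_smul {d : Fin n → ℕ} (hd : ∀ j, d j < 2 ^ 8) (y : Fin n → ZMod 4) :
    res2 ((fun j => (d j : ZMod 4)) + 2 • y) = digitParity n (pack d) := by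
  funext j
  rw [digitParity_pack hd, res2, Pi.add_apply, map_add, map_natCast, Pi.smul_apply, map_nsmul,
    CharTwo.two_nsmul, add_zero]

theorem leeWt_natCast_add_two_smul {d : Fin n → ℕ} (hd : ∀ j, d j < 2 ^ 8) (y : Fin n → ZMod 4) :
    leeWt ((fun j => (d j : ZMod 4)) + 2 • y) = hWt (digitParity n (pack d)) +
      2 * hWt ((1 + digitParity n (pack d)) * (digitParity n (pack d / 2) + res2 y)) := by
  have eq_two_iff (a : ℕ) (c : ZMod 4) : (a : ZMod 4) + 2 • c = 2 ↔ (1 + (a : ZMod 2)) *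
      ((a / 2 : ℕ) + ZMod.castHom (by norm_num : (2 : ℕ) ∣ 4) (ZMod 2) c) ≠ 0 := by
    have eq_two_iff_of_lt : ∀ a : ℕ, a < 4 → ∀ c : ZMod 4,
        (a : ZMod 4) + 2 • c = 2 ↔ (1 + (a : ZMod 2)) *
          ((a / 2 : ℕ) + ZMod.castHom (by norm_num : (2 : ℕ) ∣ 4) (ZMod 2) c) ≠ 0 := by decide
    have half_mod : a % 4 / 2 = a / 2 % 2 := by omega
    have := eq_two_iff_of_lt (a % 4) (Nat.mod_lt _ (by norm_num)) c
    rwa [ZMod.natCast_mod, half_mod, ZMod.natCast_mod, ← ZMod.natCast_mod (a % 4),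
      Nat.mod_mod_of_dvd a (by norm_num : 2 ∣ 4), ZMod.natCast_mod] at this
  rw [leeWt_eq_hWt_res2_add, res2_natCast_add_two_smul hd]
  congr 3
  ext j
  simp only [Finset.mem_filter_univ, Pi.add_apply, Pi.smul_apply, Pi.mul_apply, Pi.one_apply,
    digitParity_pack hd, digitParity_pack_div_two hd, eq_two_iff, res2]

end Parity

section Search

variable {n : ℕ}

/-- The value `f x`, in a form for which the kernel evaluates `x` before substituting it. -/
def eager {α : Type*} (x : ℕ) (f : ℕ → α) : α :=
  Nat.rec (f 0) (fun y _ => f (Nat.succ y)) x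

theorem eager_eq {α : Type*} (x : ℕ) (f : ℕ → α) : eager x f = f x := by
  cases x <;> rfl

/-- The variant of `eager` for a list of numbers. -/
def eagerList {α : Type*} : List ℕ → (List ℕ → α) → α
  | [], f => f []
  | x :: l, f => eager x fun y => eagerList l fun l' => f (y :: l')

theorem eagerList_eq {α : Type*} (l : List ℕ) (f : List ℕ → α) : eagerList l f = f l := by
  induction l generalizing f with
  | nil => rfl
  | cons x l ih => rw [eagerList, eager_eq, ih]

/-- The number of odd base `256` digits of `x`, where `o` has all digits equal to 1. It can be
read off modulo 255 since `256 % 255 = 1`. -/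
def oddCount (o x : ℕ) : ℕ := Nat.mod (Nat.land x o) 255

theorem oddCount_land (hn : n < 255) (x y : ℕ) :
    oddCount (ones n) (Nat.land x y) =
      hWt (digitParity n x * digitParity n y) := by
  rw [← digitParity_land, hWt_digitParity hn]
  rfl

/-- Given a test `f w h` that every vector of a coset `h + C` has more than `w` odd digits in the
positions of a fixed mask, tests the same for the code generated by `C` and a list of further rows.
The mask `m` consists of the positions at which all of `C` is even, hence the odd digits of `h` in
these positions are common to the coset. -/
def signSearch (o : ℕ) : List ℕ → ℕ → (ℕ → ℕ → Bool) → ℕ → ℕ → Bool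
  | [], _, f => f
  | r :: rs, m, f => eager (Nat.land m (Nat.xor r o)) fun m' =>
      signSearch o rs m' fun w h =>
        or (Nat.blt w (oddCount o (Nat.land h m'))) (and (f w h) (eager (Nat.xor h r) (f w)))

theorem mul_add_one_mul_eq_zero {C : Submodule (ZMod 2) (Fin n → ZMod 2)} {m r v : Fin n → ZMod 2}
    (hC : ∀ v ∈ C, m * v = 0) (hv : v ∈ C ⊔ Submodule.span (ZMod 2) {r}) :
    m * (r + 1) * v = 0 := by
  have add_one_mul_self : (r + 1) * r = 0 := by
    have : ∀ a : ZMod 2, (a + 1) * a = 0 := by decide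
    exact funext fun j => this _
  obtain ⟨x, hx, y, hy, rfl⟩ := Submodule.mem_sup.1 hv
  obtain ⟨a, rfl⟩ := Submodule.mem_span_singleton.1 hy
  rw [mul_add, mul_right_comm, hC x hx, zero_mul, zero_add, mul_smul_comm, mul_assoc,
    add_one_mul_self, mul_zero, smul_zero]

theorem lt_hWt_of_signSearch (hn : n < 255) {m₀ m : ℕ} {f : ℕ → ℕ → Bool}
    {C : Submodule (ZMod 2) (Fin n → ZMod 2)}
    (hm : digitParity n m * digitParity n m₀ = digitParity n m)
    (hC : ∀ v ∈ C, digitParity n m * v = 0)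
    (hf : ∀ w h, f w h → ∀ v ∈ C, w < hWt (digitParity n m₀ * (digitParity n h + v)))
    {rows : List ℕ} {w h : ℕ} (hs : signSearch (ones n) rows m f w h)
    {v : Fin n → ZMod 2} (hv : v ∈ C ⊔ Submodule.span (ZMod 2) {x | x ∈ rows.map (digitParity n)}) :
    w < hWt (digitParity n m₀ * (digitParity n h + v)) := by
  induction rows generalizing m f C with
  | nil => exact hf w h hs v (by simpa using hv)
  | cons r rs ih =>
    rw [signSearch, eager_eq] at hs
    have mask_eq : digitParity n (Nat.land m (Nat.xor r (ones n))) =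
        digitParity n m * (digitParity n r + 1) := by
      rw [← digitParity_ones, ← digitParity_xor, ← digitParity_land]
      rfl
    rw [List.map_cons, List.setOfPred_mem_cons, Submodule.span_insert, ← sup_assoc] at hv
    refine ih (by rw [mask_eq, mul_right_comm, hm])
      (fun v hv => mask_eq ▸ mul_add_one_mul_eq_zero hC hv) ?_ hs hv
    intro w h hw v hv
    rw [Bool.or_eq_true, Bool.and_eq_true, eager_eq, Nat.blt_eq, oddCount_land hn, mask_eq] at hw
    rcases hw with mask_lt | ⟨hf₀, hf₁⟩
    · have mask_mul_add : digitParity n m * (digitParity n r + 1) *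
          (digitParity n m₀ * (digitParity n h + v)) =
            digitParity n h * (digitParity n m * (digitParity n r + 1)) := by
        linear_combination (digitParity n r + 1) * (digitParity n h + v) * hm +
          mul_add_one_mul_eq_zero hC hv
      rw [← mask_mul_add] at mask_lt
      exact mask_lt.trans_le (hWt_mul_le _ _)
    · obtain ⟨x, hx, y, hy, rfl⟩ := Submodule.mem_sup.1 hv
      obtain ⟨a, rfl⟩ := Submodule.mem_span_singleton.1 hy
      have zero_or_one : ∀ a : ZMod 2, a = 0 ∨ a = 1 := by decide
      rcases zero_or_one a with rfl | rfl
      · rw [zero_smul, add_zero]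
        exact hf w h hf₀ x hx
      · rw [one_smul, add_comm x, ← add_assoc, ← digitParity_xor]
        exact hf w _ hf₁ x hx

/-- Tests `f (w - l)` on all vectors `h + t`, where `t` is the sum of `l` of the listed rows and
`l` is at most a given number. -/
def twoSearch (f : ℕ → ℕ → Bool) : List ℕ → ℕ → ℕ → ℕ → Bool
  | [], _, w, h => f w h
  | _ :: _, 0, w, h => f w h
  | r :: rs, t + 1, w, h =>
      and (eager (Nat.xor h r) (twoSearch f rs t (Nat.sub w 1))) (twoSearch f rs (t + 1) w h)

theorem exists_of_twoSearch (n : ℕ) {f : ℕ → ℕ → Bool} {rows T : List ℕ} (hT : T.Sublist rows)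
    {t w h : ℕ} (ht : T.length ≤ t) (hs : twoSearch f rows t w h) :
    ∃ h', f (w - T.length) h' ∧
      digitParity n h' = digitParity n h + (T.map (digitParity n)).sum := by
  induction hT generalizing t w h with
  | slnil => exact ⟨h, hs, by simp⟩
  | cons r hT ih =>
    cases t with
    | zero =>
      obtain rfl := List.length_eq_zero_iff.1 (Nat.le_zero.1 ht)
      exact ⟨h, hs, by simp⟩
    | succ t => exact ih ht (Bool.and_eq_true _ _ ▸ hs).2
  | cons_cons r _ ih =>
    cases t with
    | zero => simp at ht
    | succ t =>
      rw [twoSearch, Bool.and_eq_true, eager_eq] at hs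
      obtain ⟨h', hf, parity_eq⟩ := ih (Nat.le_of_succ_le_succ ht) hs.1
      refine ⟨h', ?_, ?_⟩
      · rwa [List.length_cons, add_comm, ← Nat.sub_sub]
      · rw [parity_eq, List.map_cons, List.sum_cons, ← add_assoc, ← digitParity_xor]
        rfl

/-- Tests that the words `a` of Lee weight at most 8, with a given set of `k` odd coordinates, give
codewords with at least 9 odd coordinates and of Lee weight at least 17. The rows of `M` at the odd
coordinates are listed in `odd`, and `s` is their digitwise sum. A codeword with `n` odd coordinates
has Lee weight at least 17 if and only if more than `(16 - n) / 2` of its coordinates are 2, or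
`17 ≤ n`. -/
def leafCheck (o : ℕ) (rows : List ℕ) (k s : ℕ) (odd : List ℕ) : Bool :=
  eager (Nat.add k (oddCount o s)) fun n =>
    or (Nat.ble 17 n) (and (Nat.ble 9 n)
      (eager (Nat.xor o (Nat.land s o)) fun m => eager (Nat.div s 2) fun h =>
        eager (Nat.div (Nat.sub 16 n) 2) fun w =>
          twoSearch (signSearch o odd m fun w h => Nat.blt w (oddCount o (Nat.land h m)))
            rows (min (Nat.div (Nat.sub 8 k) 2) w) w h))

theorem le_of_leafCheck (hn : n < 255) {rows odd : List ℕ} {k s : ℕ}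
    (hs : leafCheck (ones n) rows k s odd) {T : List ℕ} (hT : T.Sublist rows)
    (hk : k + 2 * T.length ≤ 8) {v : Fin n → ZMod 2}
    (hv : v ∈ Submodule.span (ZMod 2) {x | x ∈ odd.map (digitParity n)}) :
    9 ≤ k + hWt (digitParity n s) ∧
      17 ≤ k + hWt (digitParity n s) + 2 * (T.length + hWt ((1 + digitParity n s) *
        (digitParity n (s / 2) + (T.map (digitParity n)).sum + v))) := by
  have mask_eq : digitParity n (Nat.xor (ones n) (Nat.land s (ones n))) = 1 + digitParity n s := by
    rw [← digitParity_ones, ← mul_one (digitParity n s), ← digitParity_ones, ← digitParity_land,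
      ← digitParity_xor]
    rfl
  have mask_sq : (1 + digitParity n s) * (1 + digitParity n s) = 1 + digitParity n s := by
    have mul_self : ∀ a : ZMod 2, a * a = a := by decide
    exact funext fun j => mul_self _
  have count_eq : oddCount (ones n) s = hWt (digitParity n s) := (hWt_digitParity hn s).symm
  rw [leafCheck, eager_eq, Bool.or_eq_true, Bool.and_eq_true, Nat.ble_eq, Nat.ble_eq, eager_eq,
    eager_eq, eager_eq, count_eq, Nat.add_eq] at hs
  rcases hs with hs | ⟨nine_le, hs⟩
  · omega
  refine ⟨nine_le, ?_⟩
  change twoSearch _ _ (min ((8 - k) / 2) ((16 - (k + hWt (digitParity n s))) / 2))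
    ((16 - (k + hWt (digitParity n s))) / 2) (s / 2) = true at hs
  rcases lt_or_ge ((16 - (k + hWt (digitParity n s))) / 2) T.length with hT' | hT'
  · omega
  obtain ⟨h, hs, parity_eq⟩ := exists_of_twoSearch n hT (le_min (by omega) hT') hs
  have lt_hWt := lt_hWt_of_signSearch (C := ⊥) hn (by rw [mask_eq, mask_sq]) (by simp) (by
    intro w h hw v hv
    rw [Nat.blt_eq, oddCount_land hn, mul_comm] at hw
    rwa [(Submodule.mem_bot _).1 hv, add_zero]) hs (by rwa [bot_sup_eq])
  rw [mask_eq, parity_eq] at lt_hWt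
  omega

/-- Runs through the sets of `c` rows, subject to the ballot condition that among any `j` first rows
at least `(k * j - b) / N` are chosen, and tests `leaf` on the sum of the chosen rows and `s`. -/
def ballotSearch (N k : ℕ) (leaf : ℕ → List ℕ → Bool) : List ℕ → ℕ → ℕ → ℕ → List ℕ → Bool
  | _, 0, _, s, odd => leaf s odd
  | [], _ + 1, _, _, _ => true
  | r :: rs, c + 1, b, s, odd =>
      and (ballotSearch N k leaf rs c (Nat.sub (Nat.add b N) k) (Nat.add s r) (r :: odd))
        (or (Nat.blt b k) (ballotSearch N k leaf rs (c + 1) (Nat.sub b k) s odd))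

theorem leaf_of_ballotSearch {ι : Type*} {p : ι → Prop} [DecidablePred p] {R : ι → ℕ} {N k : ℕ}
    {leaf : ℕ → List ℕ → Bool} {is : List ι} {c b s : ℕ} {odd : List ℕ}
    (hs : ballotSearch N k leaf (is.map R) c b s odd) (hc : is.countP p = c)
    (hb : ∀ j ≤ is.length, k * j ≤ b + N * (is.take j).countP p) :
    leaf (s + ((is.filter p).map R).sum) (((is.filter p).map R).reverse ++ odd) := by
  induction is generalizing c b s odd with
  | nil =>
    obtain rfl : c = 0 := hc.symm
    exact hs
  | cons i is ih =>
    cases c with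
    | zero =>
      rw [List.countP_eq_length_filter, List.length_eq_zero_iff] at hc
      rw [hc]
      exact hs
    | succ c =>
      rw [List.map_cons, ballotSearch, Bool.and_eq_true, Bool.or_eq_true, Nat.blt_eq] at hs
      have first_le := hb 1 (by simp)
      have rest_le (j : ℕ) (hj : j ≤ is.length) := hb (j + 1) (Nat.succ_le_succ hj)
      simp only [List.take_succ_cons, List.countP_cons, List.take_zero, List.countP_nil, mul_add,
        mul_one] at hc first_le rest_le
      by_cases hi : p i
      · have := ih hs.1 (by simpa [hi] using hc) fun j hj => by
          have := rest_le j hj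
          simp only [hi, decide_true, if_true] at this first_le
          change _ ≤ b + N - k + _
          omega
        simpa [List.filter_cons_of_pos, hi, add_assoc] using this
      · simp only [hi, decide_false, Bool.false_eq_true, if_false, add_zero, mul_zero]
          at hc first_le rest_le
        have := ih (hs.2.resolve_left first_le.not_gt) hc fun j hj => by
          have := rest_le j hj
          change _ ≤ b - k + _
          omega
        simpa [List.filter_cons_of_neg, hi] using this

/-- Tests the words `a` with `k` odd coordinates, first those for which `a 0` is even and then those
for which it is odd, where `M` is supposed to be invariant under cyclic shifts of the other
coordinates. -/
def bdcSearch {m : ℕ} (M : Matrix (Fin (m + 1)) (Fin (m + 1)) (ZMod 4)) (k : ℕ) : Bool :=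
  eager (ones (m + 1)) fun o => eager (packRow M 0) fun r =>
    eagerList ((List.finRange m).map fun i => packRow M i.succ) fun rs => and
      (ballotSearch m k (leafCheck o (r :: rs) k) rs k 0 0 [])
      (ballotSearch m (k - 1) (leafCheck o (r :: rs) k) rs (k - 1) 0 r [r])

end Search

section Words

variable {ι κ : Type*}

theorem res2_add (x y : ι → ZMod 4) : res2 (x + y) = res2 x + res2 y :=
  funext fun _ => map_add _ _ _

theorem res2_sum {s : Finset κ} (f : κ → ι → ZMod 4) :
    res2 (∑ k ∈ s, f k) = ∑ k ∈ s, res2 (f k) := by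
  funext i
  simp [res2, Finset.sum_apply]

variable [Fintype ι]

/-- The rows with odd coefficient contribute to the parity, whereas the signs of these coefficients
and the rows with coefficient 2 only contribute multiples of 2. -/
theorem vecMul_eq_natCast_add_two_smul (a : ι → ZMod 4) (M : Matrix ι κ (ZMod 4)) :
    a ᵥ* M = (fun j => ((∑ i with res2 a i ≠ 0, (M i j).val : ℕ) : ZMod 4)) +
      2 • (∑ i with a i = 2, M.row i + ∑ i with a i = 3, M.row i) := by
  have mul_eq : ∀ x y : ZMod 4, x * y =
      (if ZMod.castHom (by norm_num : (2 : ℕ) ∣ 4) (ZMod 2) x ≠ 0 then y else 0) +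
        2 * ((if x = 2 then y else 0) + if x = 3 then y else 0) := by decide
  funext j
  calc (a ᵥ* M) j = ∑ i, a i * M i j := rfl
    _ = _ := by
      rw [Finset.sum_congr rfl fun i _ => mul_eq (a i) (M i j), Finset.sum_add_distrib,
        ← Finset.mul_sum, Finset.sum_add_distrib, ← Finset.sum_filter, ← Finset.sum_filter,
        ← Finset.sum_filter]
      rw [Pi.add_apply, Pi.smul_apply, nsmul_eq_mul, Pi.add_apply, Finset.sum_apply,
        Finset.sum_apply]
      simp only [Nat.cast_sum, ZMod.natCast_zmod_val, Nat.cast_ofNat]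
      rfl

theorem length_eq_card_filter {p : ι → Prop} [DecidablePred p] {l : List ι} (hl : l.Nodup)
    (mem_l : ∀ i, i ∈ l ↔ p i) : l.length = #{i | p i} := by
  classical
  rw [← List.toFinset_card_of_nodup hl]
  congr 1
  ext i
  simp [mem_l]

theorem sum_map_eq_sum_filter {A : Type*} [AddCommMonoid A] {p : ι → Prop} [DecidablePred p]
    {l : List ι} (hl : l.Nodup) (mem_l : ∀ i, i ∈ l ↔ p i) (f : ι → A) :
    (l.map f).sum = ∑ i with p i, f i := by
  classical
  rw [← List.sum_toFinset f hl]
  refine Finset.sum_congr ?_ fun _ _ => rfl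
  ext i
  simp [mem_l]

theorem le_of_leafCheck_vecMul {n : ℕ} (hn : n < 255) {M : Matrix ι (Fin n) (ZMod 4)}
    {a : ι → ZMod 4} (ha : leeWt a ≤ 8) {l is : List ι} (hl : l.Nodup)
    (mem_l : ∀ i, i ∈ l ↔ res2 a i ≠ 0) (nodup_is : is.Nodup) (mem_is : ∀ i, i ∈ is)
    (hs : leafCheck (ones n) (is.map (packRow M)) (hWt (res2 a)) (l.map (packRow M)).sum
      (l.map (packRow M))) :
    9 ≤ hWt (res2 a) + hWt (res2 (a ᵥ* M)) ∧ 17 ≤ leeWt a + leeWt (a ᵥ* M) := by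
  set twos := is.filter (a · = 2) with twos_eq
  have mem_twos (i : ι) : i ∈ twos ↔ a i = 2 := by simp [twos_eq, mem_is]
  have nodup_twos : twos.Nodup := nodup_is.filter _
  have leeWt_eq : leeWt a = hWt (res2 a) + 2 * twos.length := by
    rw [leeWt_eq_hWt_res2_add, length_eq_card_filter nodup_twos mem_twos]
  set d : Fin n → ℕ := fun j => ∑ i with res2 a i ≠ 0, (M i j).val
  have sum_eq : (l.map (packRow M)).sum = pack d :=
    (sum_map_pack _ _).trans (congrArg pack (funext fun _ => sum_map_eq_sum_filter hl mem_l _))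
  have d_lt (j : Fin n) : d j < 2 ^ 8 :=
    calc d j ≤ hWt (res2 a) * 3 := Finset.sum_le_card_nsmul _ _ 3 fun i _ =>
          Nat.le_of_lt_succ (ZMod.val_lt (M i j))
      _ < 2 ^ 8 := by omega
  have twos_sum : ((twos.map (packRow M)).map (digitParity n)).sum =
      ∑ i with a i = 2, res2 (M.row i) := by
    rw [List.map_map, sum_map_eq_sum_filter nodup_twos mem_twos]
    simp only [Function.comp_def, digitParity_packRow]
  have signs_mem : ∑ i with a i = 3, res2 (M.row i) ∈
      Submodule.span (ZMod 2) {x | x ∈ (l.map (packRow M)).map (digitParity n)} := by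
    refine Submodule.sum_mem _ fun i hi => Submodule.subset_span ?_
    rw [Set.mem_ofPred_eq, ← digitParity_packRow]
    refine List.mem_map_of_mem (List.mem_map_of_mem ((mem_l i).2 ?_))
    rw [res2, (Finset.mem_filter.1 hi).2]
    decide
  have bounds := le_of_leafCheck hn hs (T := twos.map (packRow M)) (List.filter_sublist.map _)
    (by rw [List.length_map]; omega) signs_mem
  rw [sum_eq, List.length_map, twos_sum, add_assoc (digitParity n _), ← res2_sum, ← res2_sum,
    ← res2_add] at bounds
  rw [vecMul_eq_natCast_add_two_smul, res2_natCast_add_two_smul d_lt,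
    leeWt_natCast_add_two_smul d_lt]
  omega

end Words

section Ballot

variable {m : ℕ}

theorem exists_countP_mul_le [NeZero m] (p : Fin m → Prop) [DecidablePred p] :
    ∃ t : Fin m, ∀ j ≤ m, (List.finRange m).countP p * j ≤
      m * ((List.finRange m).take j).countP fun i => p (i + t) := by
  have count_eq (q : ℕ → Prop) [DecidablePred q] {j : ℕ} (hj : j ≤ m) :
      Nat.count q j = ((List.finRange m).take j).countP fun i : Fin m => q i := by
    rw [Nat.count, ← Nat.min_eq_left hj, ← List.take_range, Nat.min_eq_left hj,
      ← List.map_coe_finRange_eq_range, ← List.map_take, List.countP_map]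
    rfl
  obtain ⟨t, -, ht⟩ := exists_count_mul_le_of_periodic (p := fun i => p (Fin.ofNat m i))
    (NeZero.pos m) fun i => by simp [Fin.ofNat]
  have ofNat_add (i : Fin m) : Fin.ofNat m (t + i) = i + Fin.ofNat m t :=
    Fin.ext (by simp [Fin.val_add, add_comm])
  refine ⟨Fin.ofNat m t, fun j hj => ?_⟩
  have := ht j
  rw [count_eq _ le_rfl, count_eq _ hj, List.take_of_length_le (by simp)] at this
  simpa only [ofNat_add, Fin.ofNat_val_eq_self] using this

theorem le_of_bdcSearch_of_ballot (hm : m + 1 < 255)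
    {M : Matrix (Fin (m + 1)) (Fin (m + 1)) (ZMod 4)} {a : Fin (m + 1) → ZMod 4} (ha : leeWt a ≤ 8)
    (hs : bdcSearch M (hWt (res2 a)))
    (ballot : ∀ j ≤ m, (List.finRange m).countP (fun i => res2 a i.succ ≠ 0) * j ≤
      m * ((List.finRange m).take j).countP fun i => res2 a i.succ ≠ 0) :
    9 ≤ hWt (res2 a) + hWt (res2 (a ᵥ* M)) ∧ 17 ≤ leeWt a + leeWt (a ᵥ* M) := by
  set oddRows := (List.finRange m).filter fun i => res2 a i.succ ≠ 0 with oddRows_eq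
  have nodup_oddRows : (oddRows.map Fin.succ).reverse.Nodup :=
    List.nodup_reverse.2 (((List.nodup_finRange m).filter _).map (Fin.succ_injective m))
  have mem_oddRows (i : Fin m) : i ∈ oddRows ↔ res2 a i.succ ≠ 0 := by simp [oddRows_eq]
  have rows_eq : packRow M 0 :: (List.finRange m).map (fun i => packRow M i.succ) =
      (List.finRange (m + 1)).map (packRow M) := by
    rw [List.finRange_succ, List.map_cons, List.map_map]
    rfl
  have leaf_oddRows {leaf : ℕ → List ℕ → Bool} {s : ℕ} {odd : List ℕ} {c : ℕ}
      (hc : (List.finRange m).countP (fun i => res2 a i.succ ≠ 0) = c)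
      (hs : ballotSearch m c leaf ((List.finRange m).map fun i => packRow M i.succ) c 0 s odd) :
      leaf (s + (oddRows.map fun i => packRow M i.succ).sum)
        ((oddRows.map fun i => packRow M i.succ).reverse ++ odd) :=
    leaf_of_ballotSearch hs hc (by simpa [← hc] using ballot)
  rw [bdcSearch, eager_eq, eager_eq, eagerList_eq, Bool.and_eq_true, rows_eq] at hs
  by_cases border : res2 a 0 = 0
  · have mem_l (i) : i ∈ (oddRows.map Fin.succ).reverse ↔ res2 a i ≠ 0 := by
      cases i using Fin.cases <;> simp [mem_oddRows, border]
    have hWt_eq : hWt (res2 a) = _ := (length_eq_card_filter nodup_oddRows mem_l).symm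
    have := leaf_oddRows (by simp [hWt_eq, oddRows_eq, List.countP_eq_length_filter]) hs.1
    refine le_of_leafCheck_vecMul hm ha nodup_oddRows mem_l (List.nodup_finRange _)
      List.mem_finRange ?_
    simpa [Function.comp_def] using this
  · have mem_l (i) : i ∈ (oddRows.map Fin.succ).reverse ++ [0] ↔ res2 a i ≠ 0 := by
      cases i using Fin.cases <;> simp [mem_oddRows, border]
    have nodup_l : ((oddRows.map Fin.succ).reverse ++ [0]).Nodup :=
      nodup_oddRows.append (List.nodup_singleton 0) (by simp)
    have hWt_eq : hWt (res2 a) = _ := (length_eq_card_filter nodup_l mem_l).symm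
    have := leaf_oddRows (by simp [hWt_eq, oddRows_eq, List.countP_eq_length_filter]) hs.2
    refine le_of_leafCheck_vecMul hm ha nodup_l mem_l (List.nodup_finRange _) List.mem_finRange ?_
    simpa [Function.comp_def, add_comm] using this

/-- A search over the words whose odd coordinates satisfy the ballot condition suffices, since the
cyclic shifts of a word have the same weights. -/
theorem le_of_bdcSearch [NeZero m] (hm : m + 1 < 255) {α β γ : ZMod 4} {r : Fin m → ZMod 4}
    {a : Fin (m + 1) → ZMod 4} (ha : leeWt a ≤ 8)
    (hs : bdcSearch (bdcMatrix α β γ r) (hWt (res2 a))) :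
    9 ≤ hWt (res2 a) + hWt (res2 (a ᵥ* bdcMatrix α β γ r)) ∧
      17 ≤ leeWt a + leeWt (a ᵥ* bdcMatrix α β γ r) := by
  obtain ⟨t, ballot⟩ := exists_countP_mul_le fun i => res2 a i.succ ≠ 0
  set e := borderPerm (Equiv.addRight t) with he
  have res2_comp (x : Fin (m + 1) → ZMod 4) : res2 (x ∘ e) = res2 x ∘ e := rfl
  have comp_succ (i : Fin m) : res2 (a ∘ e) i.succ = res2 a (i + t).succ := by
    rw [res2_comp, Function.comp_apply, he, borderPerm_succ, Equiv.coe_addRight]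
  have count_eq : (List.finRange m).countP (fun i => res2 a (i + t).succ ≠ 0) =
      (List.finRange m).countP (fun i => res2 a i.succ ≠ 0) := by
    rw [← (Equiv.Perm.map_finRange_perm (Equiv.addRight t)).countP_eq fun i =>
      decide (res2 a i.succ ≠ 0), List.countP_map]
    rfl
  have := le_of_bdcSearch_of_ballot hm (a := a ∘ e) (by rwa [leeWt_comp_equiv])
    (by rwa [res2_comp, hWt_comp_equiv]) (by simpa only [comp_succ, count_eq] using ballot)
  rwa [vecMul_bdcMatrix_comp_addRight, ← he, res2_comp, res2_comp, hWt_comp_equiv, hWt_comp_equiv,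
    leeWt_comp_equiv, leeWt_comp_equiv] at this

end Ballot

section MinimumWeight

variable {m : ℕ} {α β γ : ZMod 4} {r : Fin m → ZMod 4}

theorem four_dvd_eucWt_of_mem_bdcCode (hM : bdcMatrix α β γ r * (bdcMatrix α β γ r)ᵀ = -1)
    {x : Fin (m + 1) ⊕ Fin (m + 1) → ZMod 4} (hx : x ∈ bdcCode α β γ r) : 4 ∣ eucWt x := by
  rw [← ZMod.natCast_eq_zero_iff, natCast_eucWt, dotProduct_eq_zero_of_mem_bdcCode hM hx hx]

variable [NeZero m]

theorem seventeen_le_leeWt_of_leeWt_le (hm : m + 1 < 255)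
    (search : ∀ k ∈ Finset.Icc 1 8, bdcSearch (bdcMatrix α β γ r) k) {a : Fin (m + 1) → ZMod 4}
    (ha : a ≠ 0) (leeWt_le : leeWt a ≤ 8) : 17 ≤ leeWt a + leeWt (a ᵥ* bdcMatrix α β γ r) := by
  by_cases res2_eq : res2 a = 0
  · obtain ⟨y, rfl, leeWt_y⟩ := exists_eq_two_smul_of_res2_eq_zero res2_eq
    have y_ne : y ≠ 0 := fun hy => ha (by rw [hy, smul_zero])
    have res2_pos : 0 < hWt (res2 y) := leeWt_y ▸ leeWt_pos y_ne
    rw [leeWt_two_smul] at leeWt_le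
    have := (le_of_bdcSearch hm (by omega) (search _ (Finset.mem_Icc.2 ⟨res2_pos, by omega⟩))).1
    rw [Matrix.smul_vecMul, leeWt_two_smul, leeWt_two_smul]
    omega
  · have hWt_le : hWt (res2 a) ≤ leeWt a := leeWt_eq_hWt_res2_add a ▸ Nat.le_add_right _ _
    exact (le_of_bdcSearch hm leeWt_le
      (search _ (Finset.mem_Icc.2 ⟨hWt_pos res2_eq, hWt_le.trans leeWt_le⟩))).2

theorem seventeen_le_leeWt_of_mem_bdcCode
    (hM : bdcMatrix α β β r * (bdcMatrix α β β r)ᵀ = -1) (hm : m + 1 < 255)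
    (search : ∀ k ∈ Finset.Icc 1 8, bdcSearch (bdcMatrix α β β r) k)
    {x : Fin (m + 1) ⊕ Fin (m + 1) → ZMod 4} (hx : x ∈ bdcCode α β β r) (x_ne : x ≠ 0) :
    17 ≤ leeWt x := by
  rw [mem_bdcCode_iff] at hx
  rw [leeWt_eq_inl_add_inr]
  have inl_ne : x ∘ Sum.inl ≠ 0 := fun hl => x_ne <| by
    rw [← Sum.elim_comp_inl_inr x, hx, hl, Matrix.zero_vecMul, Sum.elim_zero_zero]
  rcases le_or_gt (leeWt (x ∘ Sum.inl)) 8 with inl_le | inl_gt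
  · rw [hx]
    exact seventeen_le_leeWt_of_leeWt_le hm search inl_ne inl_le
  rcases le_or_gt (leeWt (x ∘ Sum.inr)) 8 with inr_le | inr_gt
  · have reflect := vecMul_bdcMatrix_comp_neg hM (x ∘ Sum.inl)
    rw [← hx] at reflect
    have reflect_ne : (x ∘ Sum.inr) ∘ borderPerm (Equiv.neg _) ≠ 0 := by
      intro hr
      rw [hr, Matrix.zero_vecMul, zero_eq_neg] at reflect
      exact inl_ne ((Equiv.surjective _).injective_comp_right reflect)
    have := seventeen_le_leeWt_of_leeWt_le hm search reflect_ne (by rwa [leeWt_comp_equiv])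
    rwa [reflect, leeWt_neg, leeWt_comp_equiv, leeWt_comp_equiv, add_comm] at this
  · omega

theorem eighteen_le_leeWt_and_twenty_le_eucWt
    (hM : bdcMatrix α β β r * (bdcMatrix α β β r)ᵀ = -1) (hm : m + 1 < 255)
    (search : ∀ k ∈ Finset.Icc 1 8, bdcSearch (bdcMatrix α β β r) k)
    {x : Fin (m + 1) ⊕ Fin (m + 1) → ZMod 4} (hx : x ∈ bdcCode α β β r) (x_ne : x ≠ 0) :
    18 ≤ leeWt x ∧ 20 ≤ eucWt x := by
  have leeWt_le := seventeen_le_leeWt_of_mem_bdcCode hM hm search hx x_ne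
  have four_dvd := four_dvd_eucWt_of_mem_bdcCode hM hx
  have even_leeWt : Even (leeWt x) :=
    (even_leeWt_iff_even_eucWt x).2 (even_iff_two_dvd.2 (dvd_trans (by norm_num) four_dvd))
  have := leeWt_le_eucWt x
  grind

end MinimumWeight

section CodeD56

/-- The first row of the circulant part of the code `D_{56,2}`. -/
def rowD56 : Fin 27 → ZMod 4 :=
  ![0, 0, 2, 2, 0, 2, 0, 0, 2, 0, 0, 2, 3, 1, 2, 0, 1, 0, 1, 0, 1, 1, 1, 1, 0, 1, 1]

theorem bdcMatrix_mul_transpose_D56 :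
    bdcMatrix 0 1 1 rowD56 * (bdcMatrix 0 1 1 rowD56)ᵀ = -1 := by
  decide +kernel

set_option maxHeartbeats 4000000 in
-- The allocations of the kernel, which visits about 200000 sets of rows, count as heartbeats.
theorem bdcSearch_D56 : ∀ k ∈ Finset.Icc 1 8, bdcSearch (bdcMatrix 0 1 1 rowD56) k := by
  intro k hk
  obtain ⟨one_le, le_eight⟩ := Finset.mem_Icc.1 hk
  interval_cases k <;> decide +kernel

/-- A codeword of minimum weight of the code `D_{56,2}`. -/
def minWordD56 : Fin 28 ⊕ Fin 28 → ZMod 4 :=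
  Sum.elim
    ![1, 3, 1, 1, 0, 0, 2, 0, 0, 1, 0, 0, 0, 0, 0, 0, 0, 0, 0, 0, 0, 0, 0, 0, 0, 0, 0, 0]
    ![0, 1, 1, 0, 0, 0, 1, 0, 0, 3, 3, 1, 1, 0, 3, 3, 0, 0, 0, 3, 0, 0, 0, 0, 0, 0, 3, 0]

theorem minWordD56_mem : minWordD56 ∈ bdcCode 0 1 1 rowD56 := by
  rw [mem_bdcCode_iff]
  decide +kernel

theorem minWordD56_ne_zero : minWordD56 ≠ 0 :=
  Function.ne_iff.2 ⟨Sum.inl 0, by decide⟩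

theorem leeWt_minWordD56 : leeWt minWordD56 = 18 := by
  rw [leeWt_eq_inl_add_inr]
  decide +kernel

theorem eucWt_minWordD56 : eucWt minWordD56 = 20 := by
  rw [eucWt, Fintype.sum_sum_type]
  decide +kernel

end CodeD56

end Z4Note

open Z4Note in
/-- the bordered double circulant code `D_{56,2}` is a self-dual Type I
`ZMod 4`-code with minimum Lee weight 18 and minimum Euclidean weight 20. -/
theorem bdc_code_D56_2_properties :
    let D : Submodule (ZMod 4) ((Fin 28 ⊕ Fin 28) → ZMod 4) :=
      bdcCode 0 1 1
        ![0,0,2,2,0,2,0,0,2,0,0,2,3,1,2,0,1,0,1,0,1,1,1,1,0,1,1]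
    SelfDualZ4 D ∧ ¬ TypeII (D : Set ((Fin 28 ⊕ Fin 28) → ZMod 4)) ∧
    minLee (D : Set ((Fin 28 ⊕ Fin 28) → ZMod 4)) = 18 ∧
    minEuc (D : Set ((Fin 28 ⊕ Fin 28) → ZMod 4)) = 20 := by
  have weights_le {x} := eighteen_le_leeWt_and_twenty_le_eucWt (x := x)
    bdcMatrix_mul_transpose_D56 (by norm_num) bdcSearch_D56
  refine ⟨selfDual_bdcCode bdcMatrix_mul_transpose_D56, fun typeII => ?_, ?_, ?_⟩
  · have := eucWt_minWordD56 ▸ typeII _ minWordD56_mem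
    norm_num at this
  · exact minLee_eq minWordD56_mem minWordD56_ne_zero leeWt_minWordD56
      fun _ hy y_ne => (weights_le hy y_ne).1
  · exact minEuc_eq minWordD56_mem minWordD56_ne_zero eucWt_minWordD56
      fun _ hy y_ne => (weights_le hy y_ne).2
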